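/- arXiv:1312.0986 — 3 statements merged into one kernel-verified Lean document; each statement's English description precedes it below -/
import Mathlib

section
/- Let c : ℝⁿ → (0,∞) be locally bounded and measurable and suppose there exists a smooth function b : ℝⁿ → ℝ with all first-order partial derivatives bounded, and β ∈ ℝⁿ, such that c(x) = e^{β·x + b(x)} for all x. Then for every ε > 0 there are constants a_ε, A_ε > 0 such that a_ε e^{β·t − ε|t|} ≤ c(t+h)/c(h) ≤ A_ε e^{β·t + ε|t|} for all t, h ∈ ℝⁿ, provided additionally that ∇b(x) → 0 as |x| → ∞. -/
open MeasureTheory Real RealInnerProductSpace Filter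

/-! The heart of the matter is that `|b x - b y| ≤ C + ε |x - y|` for some `C`. Outside a large ball
the gradient of `b` is at most `ε`, so `b` is `ε`-Lipschitz along segments that avoid the ball. A
segment that meets the ball is cut at a point of it; each piece is followed inwards up to its first
point in the ball, where the mean value inequality applies, and what remains is controlled by the
oscillation of `b` on the ball. -/

section SublinearOscillation

variable {E F : Type*} [NormedAddCommGroup E] [NormedSpace ℝ E] [NormedAddCommGroup F]
  [NormedSpace ℝ F] {f : E → F} {s : Set E} {C ε : ℝ}

lemma exists_mem_segment_inter_eq_singleton (hs : IsClosed s) (x : E) {z : E} (hz : z ∈ s) :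
    ∃ y ∈ segment ℝ x z, segment ℝ x y ∩ s = {y} := by
  have hcompact : IsCompact (segment ℝ x z ∩ s) := by
    rw [segment_eq_image_lineMap]
    exact (isCompact_Icc.image AffineMap.lineMap_continuous).inter_right hs
  obtain ⟨y, ⟨hyz, hys⟩, hmin⟩ :=
    hcompact.exists_isMinOn ⟨z, right_mem_segment ℝ x z, hz⟩
      (continuous_const.dist continuous_id : Continuous (dist x)).continuousOn
  refine ⟨y, hyz, Set.eq_singleton_iff_unique_mem.2
    ⟨⟨right_mem_segment ℝ x y, hys⟩, fun w ⟨hwy, hws⟩ => ?_⟩⟩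
  have hwz : w ∈ segment ℝ x z :=
    (convex_segment x z).segment_subset (left_mem_segment ℝ x z) hyz hwy
  have hle : dist x y ≤ dist x w := hmin ⟨hwz, hws⟩
  have hadd : dist x w + dist w y = dist x y := dist_add_dist_of_mem_segment hwy
  exact dist_le_zero.1 (by linarith)

lemma norm_sub_le_of_norm_fderiv_le_segment (hf : Differentiable ℝ f) {x y : E}
    (hf' : ∀ w ∈ segment ℝ x y, w ≠ y → ‖fderiv ℝ f w‖ ≤ C) :
    ‖f x - f y‖ ≤ C * ‖x - y‖ := by
  rcases eq_or_ne x y with rfl | hxy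
  · simp
  have hderiv (t : ℝ) : HasDerivAt (fun t => f (AffineMap.lineMap x y t))
      (fderiv ℝ f (AffineMap.lineMap x y t) (y - x)) t :=
    (hf _).hasFDerivAt.comp_hasDerivAt t AffineMap.hasDerivAt_lineMap
  have hbound (t : ℝ) (ht : t ∈ Set.Ico (0 : ℝ) 1) :
      ‖fderiv ℝ f (AffineMap.lineMap x y t) (y - x)‖ ≤ C * ‖y - x‖ := by
    have hmem : AffineMap.lineMap x y t ∈ segment ℝ x y := by
      rw [segment_eq_image_lineMap]
      exact Set.mem_image_of_mem _ (Set.Ico_subset_Icc_self ht)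
    have hne : AffineMap.lineMap x y t ≠ y := fun h =>
      (AffineMap.lineMap_eq_right_iff.1 h).elim hxy ht.2.ne
    exact ContinuousLinearMap.le_of_opNorm_le _ (hf' _ hmem hne) _
  simpa only [AffineMap.lineMap_apply_one, AffineMap.lineMap_apply_zero, norm_sub_rev] using
    norm_image_sub_le_of_norm_deriv_le_segment_01' (fun t _ => (hderiv t).hasDerivWithinAt) hbound

lemma norm_sub_le_add_mul_norm_sub_of_mem (hs : IsClosed s) (hf : Differentiable ℝ f)
    (hε : 0 ≤ ε) (hf' : ∀ x ∉ s, ‖fderiv ℝ f x‖ ≤ ε)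
    (hosc : ∀ y ∈ s, ∀ z ∈ s, ‖f y - f z‖ ≤ C) (x : E) {z : E} (hz : z ∈ s) :
    ‖f x - f z‖ ≤ C + ε * ‖x - z‖ := by
  obtain ⟨y, hyz, hy⟩ := exists_mem_segment_inter_eq_singleton hs x hz
  have hys : y ∈ s := (hy.ge rfl).2
  have hxy : ‖f x - f y‖ ≤ ε * ‖x - y‖ :=
    norm_sub_le_of_norm_fderiv_le_segment hf fun w hw hne =>
      hf' w fun hws => hne (hy.le ⟨hw, hws⟩)
  have hdist : ‖x - y‖ ≤ ‖x - z‖ := by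
    have := dist_add_dist_of_mem_segment hyz
    simp only [← dist_eq_norm]
    linarith [dist_nonneg (x := y) (y := z)]
  calc ‖f x - f z‖ ≤ ‖f x - f y‖ + ‖f y - f z‖ := norm_sub_le_norm_sub_add_norm_sub _ _ _
    _ ≤ ε * ‖x - y‖ + C := add_le_add hxy (hosc y hys z hz)
    _ ≤ ε * ‖x - z‖ + C := by gcongr
    _ = C + ε * ‖x - z‖ := add_comm _ _

lemma norm_sub_le_two_mul_add_mul_norm_sub (hs : IsClosed s) (hf : Differentiable ℝ f)
    (hC : 0 ≤ C) (hε : 0 ≤ ε) (hf' : ∀ x ∉ s, ‖fderiv ℝ f x‖ ≤ ε)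
    (hosc : ∀ y ∈ s, ∀ z ∈ s, ‖f y - f z‖ ≤ C) (x y : E) :
    ‖f x - f y‖ ≤ 2 * C + ε * ‖x - y‖ := by
  by_cases hdisj : ∀ w ∈ segment ℝ x y, w ∉ s
  · have := norm_sub_le_of_norm_fderiv_le_segment hf fun w hw _ => hf' w (hdisj w hw)
    linarith
  push Not at hdisj
  obtain ⟨z, hz, hzs⟩ := hdisj
  have hadd : ‖x - z‖ + ‖y - z‖ = ‖x - y‖ := by
    simpa only [dist_eq_norm, norm_sub_rev z y] using dist_add_dist_of_mem_segment hz
  calc ‖f x - f y‖ ≤ ‖f x - f z‖ + ‖f y - f z‖ := by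
        simpa only [norm_sub_rev (f z)] using norm_sub_le_norm_sub_add_norm_sub (f x) (f z) (f y)
    _ ≤ (C + ε * ‖x - z‖) + (C + ε * ‖y - z‖) :=
        add_le_add (norm_sub_le_add_mul_norm_sub_of_mem hs hf hε hf' hosc x hzs)
          (norm_sub_le_add_mul_norm_sub_of_mem hs hf hε hf' hosc y hzs)
    _ = 2 * C + ε * ‖x - y‖ := by rw [← hadd]; ring

lemma exists_norm_sub_le_add_mul_norm_sub_of_tendsto_fderiv (hf : Differentiable ℝ f)
    (hbdd : ∀ r, Bornology.IsBounded (f '' Metric.closedBall 0 r))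
    (hf' : Tendsto (fderiv ℝ f) (Bornology.cobounded E) (nhds 0)) (hε : 0 < ε) :
    ∃ C, ∀ x y, ‖f x - f y‖ ≤ C + ε * ‖x - y‖ := by
  have hsmall : ∀ᶠ x in Bornology.cobounded E, ‖fderiv ℝ f x‖ < ε :=
    hf'.norm.eventually_lt_const (by rwa [norm_zero])
  obtain ⟨r, -, hr⟩ := (Metric.hasBasis_cobounded_compl_closedBall (0 : E)).eventually_iff.1 hsmall
  obtain ⟨C, hC, hosc⟩ : ∃ C, 0 ≤ C ∧ ∀ y ∈ Metric.closedBall (0 : E) r,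
      ∀ z ∈ Metric.closedBall (0 : E) r, ‖f y - f z‖ ≤ C :=
    ⟨Metric.diam (f '' Metric.closedBall 0 r), Metric.diam_nonneg, fun y hy z hz => by
      rw [← dist_eq_norm]
      exact Metric.dist_le_diam_of_mem (hbdd r) (Set.mem_image_of_mem f hy)
        (Set.mem_image_of_mem f hz)⟩
  exact ⟨2 * C, norm_sub_le_two_mul_add_mul_norm_sub Metric.isClosed_closedBall hf hC hε.le
    (fun x hx => (hr hx).le) hosc⟩

end SublinearOscillation

theorem potter_estimates_general {E : Type*} [NormedAddCommGroup E] [NormedSpace ℝ E]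
    {c b : E → ℝ} (ℓ : E →+ ℝ) (hb : Differentiable ℝ b)
    (hbdd : ∀ r, Bornology.IsBounded (b '' Metric.closedBall 0 r))
    (hgrad : Tendsto (fderiv ℝ b) (Bornology.cobounded E) (nhds 0))
    (hc : ∀ x, c x = Real.exp (ℓ x + b x)) :
    ∀ ε > (0 : ℝ), ∃ aε > (0 : ℝ), ∃ Aε > (0 : ℝ), ∀ t h : E,
      aε * Real.exp (ℓ t - ε * ‖t‖) ≤ c (t + h) / c h ∧
      c (t + h) / c h ≤ Aε * Real.exp (ℓ t + ε * ‖t‖) := by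
  intro ε hε
  obtain ⟨C, hC⟩ := exists_norm_sub_le_add_mul_norm_sub_of_tendsto_fderiv hb hbdd hgrad hε
  refine ⟨Real.exp (-C), Real.exp_pos _, Real.exp C, Real.exp_pos _, fun t h => ?_⟩
  have hratio : c (t + h) / c h = Real.exp (ℓ t + (b (t + h) - b h)) := by
    rw [hc, hc, ← Real.exp_sub, map_add]
    congr 1
    ring
  have hosc : |b (t + h) - b h| ≤ C + ε * ‖t‖ := by
    simpa only [Real.norm_eq_abs, add_sub_cancel_right] using hC (t + h) h
  obtain ⟨hlower, hupper⟩ := abs_le.1 hosc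
  rw [hratio, ← Real.exp_add, ← Real.exp_add, Real.exp_le_exp, Real.exp_le_exp]
  constructor <;> linarith

/-- Potter-type estimates: if `c(x) = exp(β·x + b(x))` with `b` smooth, `∇b` bounded and
`∇b(x) → 0` as `|x| → ∞`, then for every `ε > 0` there are `a_ε, A_ε > 0` with
`a_ε e^{β·t - ε|t|} ≤ c(t+h)/c(h) ≤ A_ε e^{β·t + ε|t|}` for all `t, h`. -/
theorem potter_estimates {n : ℕ} (c b : EuclideanSpace ℝ (Fin n) → ℝ)
    (β : EuclideanSpace ℝ (Fin n))
    (hcpos : ∀ x, 0 < c x) (hcloc : ∀ K : Set (EuclideanSpace ℝ (Fin n)), IsCompact K →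
      ∃ M, ∀ x ∈ K, c x ≤ M) (hmeas : Measurable c)
    (hb : ContDiff ℝ (⊤ : ℕ∞) b)
    (hbdd : ∃ M, ∀ x, ‖fderiv ℝ b x‖ ≤ M)
    (hgrad : Tendsto (fun x => fderiv ℝ b x) (cocompact (EuclideanSpace ℝ (Fin n))) (nhds 0))
    (hc : ∀ x, c x = Real.exp (⟪β, x⟫ + b x)) :
    ∀ ε > (0 : ℝ), ∃ aε > (0 : ℝ), ∃ Aε > (0 : ℝ), ∀ t h : EuclideanSpace ℝ (Fin n),
      aε * Real.exp (⟪β, t⟫ - ε * ‖t‖) ≤ c (t + h) / c h ∧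
      c (t + h) / c h ≤ Aε * Real.exp (⟪β, t⟫ + ε * ‖t‖) :=
  potter_estimates_general (innerₛₗ ℝ β).toAddMonoidHom (hb.differentiable (by simp))
    (fun r => ((isCompact_closedBall 0 r).image hb.continuous).isBounded)
    (by rwa [Metric.cobounded_eq_cocompact]) hc
end

section
/- Let f̃ : (0,∞) → ℝ be non-decreasing and nonnegative, let b : ℝ → (0,∞), r ≥ 0, and C ≥ 0. Suppose that for every φ ∈ C_c^∞(ℝ), lim_{h→∞} (1/b(h)) ∫ f̃(t+h)φ(t)dt = C ∫ e^{rt}φ(t)dt. Assume also b(t+h)/b(h) → e^{rt} as h → ∞ uniformly for t in compact sets. Then lim_{h→∞} f̃(h)/b(h) = C. -/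
open MeasureTheory Filter

/-!
Average `f (· + h) / b h` against a smooth probability density `φ`. If `φ` lives on `[0, δ]`,
monotonicity makes the average at least `f h / b h`; if it lives on `[-δ, 0]`, at most `f h / b h`.
As `h → ∞` the average converges to the average of the limit density `g` against `φ`, which is close
to `g 0` when `δ` is small; here `g t = C * exp (r * t)`.
-/

section WeightedAverage

variable {α : Type*} [MeasurableSpace α] {μ : Measure α} {g φ : α → ℝ} {m M : ℝ}

lemma integral_mul_le_of_forall_support_le (hgφ : Integrable (fun t => g t * φ t) μ)
    (hφ_nonneg : ∀ t, 0 ≤ φ t) (hφ_integral : ∫ t, φ t ∂μ = 1)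
    (hgM : ∀ t ∈ Function.support φ, g t ≤ M) : ∫ t, g t * φ t ∂μ ≤ M := by
  have hφ : Integrable φ μ := .of_integral_ne_zero (hφ_integral ▸ one_ne_zero)
  have hle (t : α) : g t * φ t ≤ M * φ t := by
    by_cases ht : φ t = 0
    · simp only [ht, mul_zero, le_refl]
    · exact mul_le_mul_of_nonneg_right (hgM t ht) (hφ_nonneg t)
  calc ∫ t, g t * φ t ∂μ ≤ ∫ t, M * φ t ∂μ := integral_mono hgφ (hφ.const_mul M) hle
    _ = M := by rw [integral_const_mul, hφ_integral, mul_one]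

lemma le_integral_mul_of_forall_support_le (hgφ : Integrable (fun t => g t * φ t) μ)
    (hφ_nonneg : ∀ t, 0 ≤ φ t) (hφ_integral : ∫ t, φ t ∂μ = 1)
    (hmg : ∀ t ∈ Function.support φ, m ≤ g t) : m ≤ ∫ t, g t * φ t ∂μ := by
  have hneg : ∫ t, -g t * φ t ∂μ ≤ -m :=
    integral_mul_le_of_forall_support_le (by simpa only [neg_mul] using hgφ.fun_neg)
      hφ_nonneg hφ_integral fun t ht => neg_le_neg (hmg t ht)
  simp only [neg_mul, integral_neg] at hneg
  exact neg_le_neg_iff.1 hneg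

end WeightedAverage

/-- A smooth probability density on `ℝ` vanishing off `K`: the test functions against which the
translates are averaged. Compactness of the support is not a field: a compact `K` supplies it. -/
structure IsTestDensityOn (φ : ℝ → ℝ) (K : Set ℝ) : Prop where
  contDiff : ContDiff ℝ (⊤ : ℕ∞) φ
  nonneg : ∀ t, 0 ≤ φ t
  support_subset : Function.support φ ⊆ K
  integral_eq_one : ∫ t, φ t = 1

lemma exists_isTestDensityOn {K : Set ℝ} (hK : (interior K).Nonempty) :
    ∃ φ, IsTestDensityOn φ K := by
  obtain ⟨x, hx⟩ := hK
  obtain ⟨δ, hδ, hball⟩ := Metric.mem_nhds_iff.1 (mem_interior_iff_mem_nhds.1 hx)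
  let bump : ContDiffBump x := ⟨δ / 2, δ, half_pos hδ, half_lt_self hδ⟩
  exact ⟨bump.normed volume, bump.contDiff_normed, bump.nonneg_normed,
    bump.support_normed_eq.trans_subset hball, bump.integral_normed⟩

lemma exists_isTestDensityOn_Icc {a c : ℝ} (hac : a < c) :
    ∃ φ, IsTestDensityOn φ (Set.Icc a c) :=
  exists_isTestDensityOn (interior_Icc (a := a) (b := c) ▸ Set.nonempty_Ioo.2 hac)

namespace IsTestDensityOn

variable {f g φ : ℝ → ℝ} {K : Set ℝ} {a c m M : ℝ}

lemma hasCompactSupport (hφ : IsTestDensityOn φ K) (hK : IsCompact K) : HasCompactSupport φ :=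
  .of_support_subset_isCompact hK hφ.support_subset

lemma integrable_mul (hφ : IsTestDensityOn φ K) (hK : IsCompact K) (hg : IntegrableOn g K) :
    Integrable fun t => g t * φ t :=
  (integrableOn_iff_integrable_of_support_subset
    ((Function.support_mul_subset_right g φ).trans hφ.support_subset)).1
    (hg.mul_continuousOn hφ.contDiff.continuous.continuousOn hK)

lemma integral_mul_le (hφ : IsTestDensityOn φ K) (hK : IsCompact K) (hg : IntegrableOn g K)
    (hgM : ∀ t ∈ K, g t ≤ M) : ∫ t, g t * φ t ≤ M :=
  integral_mul_le_of_forall_support_le (hφ.integrable_mul hK hg) hφ.nonneg hφ.integral_eq_one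
    fun t ht => hgM t (hφ.support_subset ht)

lemma le_integral_mul (hφ : IsTestDensityOn φ K) (hK : IsCompact K) (hg : IntegrableOn g K)
    (hmg : ∀ t ∈ K, m ≤ g t) : m ≤ ∫ t, g t * φ t :=
  le_integral_mul_of_forall_support_le (hφ.integrable_mul hK hg) hφ.nonneg hφ.integral_eq_one
    fun t ht => hmg t (hφ.support_subset ht)

lemma integral_mul_mem_Icc_of_monotoneOn (hφ : IsTestDensityOn φ (Set.Icc a c)) (hac : a ≤ c)
    (hf : MonotoneOn f (Set.Icc a c)) : ∫ t, f t * φ t ∈ Set.Icc (f a) (f c) :=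
  have hfi : IntegrableOn f (Set.Icc a c) := hf.integrableOn_isCompact isCompact_Icc
  ⟨hφ.le_integral_mul isCompact_Icc hfi fun _ ht => hf (Set.left_mem_Icc.2 hac) ht ht.1,
    hφ.integral_mul_le isCompact_Icc hfi fun _ ht => hf ht (Set.right_mem_Icc.2 hac) ht.2⟩

lemma eventually_integral_translate_mem_Icc {T : ℝ} (hφ : IsTestDensityOn φ (Set.Icc a c))
    (hac : a ≤ c) (hf : MonotoneOn f (Set.Ioi T)) :
    ∀ᶠ h in atTop, ∫ t, f (t + h) * φ t ∈ Set.Icc (f (a + h)) (f (c + h)) := by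
  filter_upwards [eventually_gt_atTop (T - a)] with h hh
  have hmem {t : ℝ} (ht : t ∈ Set.Icc a c) : t + h ∈ Set.Ioi T := by
    rw [Set.mem_Ioi]
    linarith [ht.1]
  exact hφ.integral_mul_mem_Icc_of_monotoneOn (f := fun t => f (t + h)) hac
    fun _ hs _ ht hst => hf (hmem hs) (hmem ht) (add_le_add_left hst h)

end IsTestDensityOn

/-- `f` has *S-asymptotics* (shift asymptotics) `g` relative to the gauge `b`: the rescaled
translates `f (· + h) / b h` converge to `g` as distributions on `ℝ` when `h → ∞`. -/
def HasSAsymptotics (f b g : ℝ → ℝ) : Prop :=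
  ∀ φ : ℝ → ℝ, ContDiff ℝ (⊤ : ℕ∞) φ → HasCompactSupport φ →
    Tendsto (fun h => (∫ t, f (t + h) * φ t) / b h) atTop (nhds (∫ t, g t * φ t))

namespace HasSAsymptotics

variable {f b g : ℝ → ℝ} {T δ u v : ℝ}

lemma eventually_div_lt (h : HasSAsymptotics f b g) (hf : MonotoneOn f (Set.Ioi T))
    (hb : ∀ᶠ h in atTop, 0 < b h) (hδ : 0 < δ) (hg : IntegrableOn g (Set.Icc 0 δ))
    (hgv : ∀ t ∈ Set.Icc 0 δ, g t ≤ v) (hvu : v < u) : ∀ᶠ h in atTop, f h / b h < u := by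
  obtain ⟨φ, hφ⟩ := exists_isTestDensityOn_Icc hδ
  have hlim := h φ hφ.contDiff (hφ.hasCompactSupport isCompact_Icc)
  have hlim_lt : ∫ t, g t * φ t < u := (hφ.integral_mul_le isCompact_Icc hg hgv).trans_lt hvu
  filter_upwards [hlim.eventually_lt_const hlim_lt, hb,
    hφ.eventually_integral_translate_mem_Icc hδ.le hf] with h hlt hbh hmem
  rw [zero_add] at hmem
  exact (div_le_div_of_nonneg_right hmem.1 hbh.le).trans_lt hlt

lemma eventually_lt_div (h : HasSAsymptotics f b g) (hf : MonotoneOn f (Set.Ioi T))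
    (hb : ∀ᶠ h in atTop, 0 < b h) (hδ : 0 < δ) (hg : IntegrableOn g (Set.Icc (-δ) 0))
    (hvg : ∀ t ∈ Set.Icc (-δ) 0, v ≤ g t) (huv : u < v) : ∀ᶠ h in atTop, u < f h / b h := by
  have hδ' : -δ < 0 := neg_lt_zero.2 hδ
  obtain ⟨φ, hφ⟩ := exists_isTestDensityOn_Icc hδ'
  have hlim := h φ hφ.contDiff (hφ.hasCompactSupport isCompact_Icc)
  have hlt_lim : u < ∫ t, g t * φ t := huv.trans_le (hφ.le_integral_mul isCompact_Icc hg hvg)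
  filter_upwards [hlim.eventually_const_lt hlt_lim, hb,
    hφ.eventually_integral_translate_mem_Icc hδ'.le hf] with h hlt hbh hmem
  rw [zero_add] at hmem
  exact hlt.trans_le (div_le_div_of_nonneg_right hmem.2 hbh.le)

end HasSAsymptotics

theorem monotone_tauberian_general {f b g : ℝ → ℝ} {T : ℝ} (hmono : MonotoneOn f (Set.Ioi T))
    (hbpos : ∀ᶠ h in atTop, 0 < b h) (hg : LocallyIntegrable g) (hg_cont : ContinuousAt g 0)
    (hlim : HasSAsymptotics f b g) : Tendsto (fun h => f h / b h) atTop (nhds (g 0)) := by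
  have hg_Icc (a c : ℝ) : IntegrableOn g (Set.Icc a c) := hg.integrableOn_isCompact isCompact_Icc
  rw [tendsto_order]
  constructor
  · intro u hu
    obtain ⟨v, huv, hv⟩ := exists_between hu
    obtain ⟨δ, hδ, hball⟩ := Metric.nhds_basis_closedBall.eventually_iff.1
      (hg_cont.eventually_const_lt hv)
    rw [Real.closedBall_eq_Icc, zero_sub, zero_add] at hball
    exact hlim.eventually_lt_div hmono hbpos hδ (hg_Icc _ _)
      (fun t ht => (hball (Set.Icc_subset_Icc_right hδ.le ht)).le) huv
  · intro u hu
    obtain ⟨v, hv, hvu⟩ := exists_between hu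
    obtain ⟨δ, hδ, hball⟩ := Metric.nhds_basis_closedBall.eventually_iff.1
      (hg_cont.eventually_lt_const hv)
    rw [Real.closedBall_eq_Icc, zero_sub, zero_add] at hball
    exact hlim.eventually_div_lt hmono hbpos hδ (hg_Icc _ _)
      (fun t ht => (hball (Set.Icc_subset_Icc_left (neg_nonpos.2 hδ.le) ht)).le) hvu

/-- Monotone-density Tauberian step: if a nonnegative non-decreasing function `f` on `(0,∞)`
satisfies `∫ f(t+h) φ(t) dt ∼ C b(h) ∫ e^{rt} φ(t) dt` as `h → ∞` for all test functions `φ`,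
and `b(t+h)/b(h) → e^{rt}` uniformly on compacts, then `f(h)/b(h) → C`. -/
theorem monotone_tauberian (f : ℝ → ℝ) (b : ℝ → ℝ) (r C : ℝ)
    (hr : 0 ≤ r) (hC : 0 ≤ C)
    (hmono : MonotoneOn f (Set.Ioi (0 : ℝ)))
    (hnonneg : ∀ t ∈ Set.Ioi (0 : ℝ), 0 ≤ f t)
    (hbpos : ∀ t, 0 < b t)
    (hlim : ∀ φ : ℝ → ℝ, ContDiff ℝ (⊤ : ℕ∞) φ → HasCompactSupport φ →
      Tendsto (fun h => (∫ t, f (t + h) * φ t) / b h) atTop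
        (nhds (C * ∫ t, Real.exp (r * t) * φ t)))
    (hbreg : ∀ K : Set ℝ, IsCompact K → ∀ ε > (0 : ℝ),
      ∃ R : ℝ, ∀ h ≥ R, ∀ t ∈ K, |b (t + h) / b h - Real.exp (r * t)| < ε) :
    Tendsto (fun h => f h / b h) atTop (nhds C) := by
  have hg : Continuous fun t => C * Real.exp (r * t) := by fun_prop
  have hasymp : HasSAsymptotics f b fun t => C * Real.exp (r * t) := fun φ hφ hφc => by
    simpa only [mul_assoc, integral_const_mul] using hlim φ hφ hφc
  simpa only [mul_zero, Real.exp_zero, mul_one] using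
    monotone_tauberian_general hmono (.of_forall hbpos) hg.locallyIntegrable hg.continuousAt hasymp
end

section
/- For φ, ψ smooth rapidly exponentially decreasing functions on ℝⁿ (i.e., for all k, sup_{t,|α|≤k} e^{k|t|}|φ^{(α)}(t)| < ∞, and similarly for ψ), the short-time Fourier transform V_ψφ(x,ξ) satisfies: for every k ∈ ℕ there is C_k such that |V_ψφ(x,ξ)| ≤ C_k e^{−k|x|} (1+|ξ|)^{−k} for all (x,ξ) ∈ ℝ²ⁿ. -/
/-!
For fixed `x`, `V_ψ φ (x, ·)` is the Fourier transform of `t ↦ φ t * conj (ψ (t - x))`. Multiplying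
by `(1 + ‖ξ‖) ^ k` costs the `L¹` norms of the derivatives of this product of order at most `k`.
The decay in `x` comes from the triangle inequality, in the form
`exp (-a‖t‖) * exp (-b‖t - x‖) ≤ exp (-b‖x‖) * exp (-(a - |b|)‖t‖)`: for `a > |b|` part of the decay
of `φ` is traded for decay in `x` and what is left is integrable in `t`.
-/

open MeasureTheory Real RealInnerProductSpace

/-- The short-time Fourier transform `V_ψ f (x, ξ) = ∫ f(t) conj(ψ(t-x)) e^{-2πi ξ·t} dt`. -/
noncomputable def STFT {n : ℕ} (f ψ : EuclideanSpace ℝ (Fin n) → ℂ)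
    (x ξ : EuclideanSpace ℝ (Fin n)) : ℂ :=
  ∫ t, f t * (starRingEnd ℂ) (ψ (t - x)) *
    Complex.exp ((-(2 * Real.pi * ⟪ξ, t⟫) : ℝ) * Complex.I)

open scoped FourierTransform ComplexConjugate ContDiff

section Leibniz

variable {𝕜 E R : Type*} [NontriviallyNormedField 𝕜] [NormedAddCommGroup E] [NormedSpace 𝕜 E]
  [NormedRing R] [NormedAlgebra 𝕜 R]

lemma norm_iteratedFDeriv_mul_le_two_pow_mul {f g : E → R} {m : ℕ} {u v : ℝ} {x : E}
    (hf : ContDiff 𝕜 m f) (hg : ContDiff 𝕜 m g)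
    (hu : ∀ i ≤ m, ‖iteratedFDeriv 𝕜 i f x‖ ≤ u) (hv : ∀ i ≤ m, ‖iteratedFDeriv 𝕜 i g x‖ ≤ v) :
    ‖iteratedFDeriv 𝕜 m (fun y ↦ f y * g y) x‖ ≤ 2 ^ m * (u * v) := by
  have hu₀ : 0 ≤ u := (norm_nonneg _).trans (hu 0 m.zero_le)
  calc ‖iteratedFDeriv 𝕜 m (fun y ↦ f y * g y) x‖
      ≤ ∑ i ∈ Finset.range (m + 1),
          (m.choose i : ℝ) * ‖iteratedFDeriv 𝕜 i f x‖ * ‖iteratedFDeriv 𝕜 (m - i) g x‖ :=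
        norm_iteratedFDeriv_mul_le hf hg x le_rfl
    _ ≤ ∑ i ∈ Finset.range (m + 1), (m.choose i : ℝ) * (u * v) := by
        refine Finset.sum_le_sum fun i hi ↦ ?_
        rw [mul_assoc]
        gcongr
        · exact hu i (Finset.mem_range_succ_iff.mp hi)
        · exact hv (m - i) (m.sub_le i)
    _ = 2 ^ m * (u * v) := by
        rw [← Finset.sum_mul]
        exact_mod_cast congrArg (fun N : ℕ ↦ (N : ℝ) * (u * v)) m.sum_range_choose

end Leibniz

lemma integrable_exp_neg_mul_norm {E : Type*} [NormedAddCommGroup E] [NormedSpace ℝ E]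
    [FiniteDimensional ℝ E] [MeasurableSpace E] [BorelSpace E] (μ : Measure E)
    [μ.IsAddHaarMeasure] {c : ℝ} (hc : 0 < c) :
    Integrable (fun t : E ↦ exp (-c * ‖t‖)) μ := by
  have htop : Filter.Tendsto (fun t : E ↦ 1 + ‖t‖) (Filter.cocompact E) Filter.atTop :=
    Filter.tendsto_atTop_add_const_left _ 1 (tendsto_norm_cocompact_atTop (E := E))
  have hdecay : Integrable (fun t : E ↦ exp (-c * (1 + ‖t‖))) μ :=
    (Continuous.locallyIntegrable (by fun_prop)).integrable_of_isBigO_cocompact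
      ((isLittleO_exp_neg_mul_rpow_atTop hc _).comp_tendsto htop).isBigO
      ((integrable_one_add_norm (lt_add_one (Module.finrank ℝ E : ℝ))).integrableAtFilter _)
  convert! hdecay.const_mul (exp c) using 2 with t
  rw [← exp_add]
  congr 1
  ring

lemma exp_neg_mul_norm_mul_exp_neg_mul_norm_sub_le {E : Type*} [SeminormedAddCommGroup E]
    (a b : ℝ) (x t : E) :
    exp (-a * ‖t‖) * exp (-b * ‖t - x‖) ≤ exp (-b * ‖x‖) * exp (-(a - |b|) * ‖t‖) := by
  rw [← exp_add, ← exp_add, exp_le_exp]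
  have hnorm : |‖x‖ - ‖t - x‖| ≤ ‖t‖ := by
    simpa [norm_sub_rev x t] using abs_norm_sub_norm_le x (x - t)
  have hb : b * (‖x‖ - ‖t - x‖) ≤ |b| * ‖t‖ :=
    calc b * (‖x‖ - ‖t - x‖) ≤ |b| * |‖x‖ - ‖t - x‖| := (le_abs_self _).trans (abs_mul _ _).le
      _ ≤ |b| * ‖t‖ := by gcongr
  linarith

section Fourier

variable {V F : Type*} [NormedAddCommGroup V] [InnerProductSpace ℝ V] [FiniteDimensional ℝ V]
  [MeasurableSpace V] [BorelSpace V] [NormedAddCommGroup F] [NormedSpace ℂ F]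

lemma norm_pow_mul_norm_fourier_le {f : V → F} {m : ℕ} (hf : ContDiff ℝ m f)
    (hint : ∀ j ≤ m, Integrable (iteratedFDeriv ℝ j f)) (ξ : V) :
    ‖ξ‖ ^ m * ‖𝓕 f ξ‖ ≤ 2 ^ m * ∑ j ∈ Finset.range (m + 1), ∫ t, ‖iteratedFDeriv ℝ j f t‖ := by
  have hmoments (i j : ℕ) (hi : (i : ℕ∞) ≤ 0) (hj : (j : ℕ∞) ≤ m) :
      Integrable (fun t ↦ ‖t‖ ^ i * ‖iteratedFDeriv ℝ j f t‖) := by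
    obtain rfl : i = 0 := by simpa using hi
    simpa using (hint j (by exact_mod_cast hj)).norm
  simpa [Finset.sum_product] using
    Real.pow_mul_norm_iteratedFDeriv_fourier_le (K := 0) (N := m) hf hmoments
      (k := 0) le_rfl (n := m) le_rfl ξ

lemma one_add_norm_pow_mul_norm_fourier_le {f : V → F} {k : ℕ} (hf : ContDiff ℝ k f)
    (hint : ∀ j ≤ k, Integrable (iteratedFDeriv ℝ j f)) (ξ : V) :
    (1 + ‖ξ‖) ^ k * ‖𝓕 f ξ‖ ≤
      3 ^ k * ∑ j ∈ Finset.range (k + 1), ∫ t, ‖iteratedFDeriv ℝ j f t‖ := by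
  set S := ∑ j ∈ Finset.range (k + 1), ∫ t, ‖iteratedFDeriv ℝ j f t‖
  have hmonomial (m : ℕ) (hm : m ≤ k) : ‖ξ‖ ^ m * ‖𝓕 f ξ‖ ≤ 2 ^ m * S := by
    refine (norm_pow_mul_norm_fourier_le (hf.of_le (by exact_mod_cast hm))
      (fun j hj ↦ hint j (hj.trans hm)) ξ).trans ?_
    gcongr
    exact Finset.sum_le_sum_of_subset_of_nonneg (Finset.range_mono (by lia))
      fun j _ _ ↦ integral_nonneg fun t ↦ norm_nonneg _
  calc (1 + ‖ξ‖) ^ k * ‖𝓕 f ξ‖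
      = ∑ m ∈ Finset.range (k + 1), ‖ξ‖ ^ m * ‖𝓕 f ξ‖ * k.choose m := by
        rw [add_comm, add_pow, Finset.sum_mul]
        exact Finset.sum_congr rfl fun m _ ↦ by ring
    _ ≤ ∑ m ∈ Finset.range (k + 1), 2 ^ m * S * k.choose m := by
        gcongr ∑ m ∈ _, ?_ * _ with m hm
        exact hmonomial m (Finset.mem_range_succ_iff.mp hm)
    _ = (2 + 1) ^ k * S := by
        rw [add_pow, Finset.sum_mul]
        exact Finset.sum_congr rfl fun m _ ↦ by ring
    _ = 3 ^ k * S := by norm_num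

end Fourier

section Translation

variable {E : Type*} [NormedAddCommGroup E] [NormedSpace ℝ E]

lemma contDiff_conj_comp_sub {ψ : E → ℂ} {N : ℕ∞ω} (hψ : ContDiff ℝ N ψ) (x : E) :
    ContDiff ℝ N (fun t ↦ conj (ψ (t - x))) :=
  Complex.conjLIE.contDiff.comp (hψ.comp (contDiff_id.sub contDiff_const))

lemma norm_iteratedFDeriv_conj_comp_sub (ψ : E → ℂ) (x t : E) (i : ℕ) :
    ‖iteratedFDeriv ℝ i (fun t ↦ conj (ψ (t - x))) t‖ = ‖iteratedFDeriv ℝ i ψ (t - x)‖ := by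
  rw [← iteratedFDeriv_comp_sub]
  exact Complex.conjLIE.norm_iteratedFDeriv_comp_left (fun t ↦ ψ (t - x)) t i

end Translation

/-- The function `f` seen through the window `ψ` translated to `x`: the Fourier transform of
`windowed f ψ x` is `V_ψ f (x, ·)`. -/
noncomputable def windowed {E : Type*} [Sub E] (f ψ : E → ℂ) (x t : E) : ℂ :=
  f t * conj (ψ (t - x))

lemma STFT_eq_fourier_windowed {n : ℕ} (f ψ : EuclideanSpace ℝ (Fin n) → ℂ)
    (x ξ : EuclideanSpace ℝ (Fin n)) : STFT f ψ x ξ = 𝓕 (windowed f ψ x) ξ := by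
  simp only [STFT, Real.fourier_eq', windowed, smul_eq_mul, real_inner_comm, neg_mul,
    mul_comm (Complex.exp _)]

namespace windowed

variable {E : Type*} [NormedAddCommGroup E] [NormedSpace ℝ E] {f ψ : E → ℂ}

lemma contDiff {N : ℕ∞ω} (hf : ContDiff ℝ N f) (hψ : ContDiff ℝ N ψ) (x : E) :
    ContDiff ℝ N (windowed f ψ x) :=
  hf.mul (contDiff_conj_comp_sub hψ x)

variable {m k : ℕ} {a b A B : ℝ} (hf : ContDiff ℝ k f) (hψ : ContDiff ℝ k ψ)
  (hfA : ∀ t, ∀ i ≤ k, ‖iteratedFDeriv ℝ i f t‖ ≤ A * exp (-a * ‖t‖))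
  (hψB : ∀ t, ∀ i ≤ k, ‖iteratedFDeriv ℝ i ψ t‖ ≤ B * exp (-b * ‖t‖))
include hf hψ hfA hψB

lemma norm_iteratedFDeriv_le (hm : m ≤ k) (x t : E) :
    ‖iteratedFDeriv ℝ m (windowed f ψ x) t‖ ≤
      2 ^ m * (A * B) * exp (-b * ‖x‖) * exp (-(a - |b|) * ‖t‖) := by
  have hA : 0 ≤ A := by simpa using (norm_nonneg _).trans (hfA 0 0 k.zero_le)
  have hB : 0 ≤ B := by simpa using (norm_nonneg _).trans (hψB 0 0 k.zero_le)
  have hmk : (m : ℕ∞ω) ≤ k := by exact_mod_cast hm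
  calc ‖iteratedFDeriv ℝ m (windowed f ψ x) t‖
      ≤ 2 ^ m * (A * exp (-a * ‖t‖) * (B * exp (-b * ‖t - x‖))) :=
        norm_iteratedFDeriv_mul_le_two_pow_mul (hf.of_le hmk)
          (contDiff_conj_comp_sub (hψ.of_le hmk) x) (fun i hi ↦ hfA t i (hi.trans hm))
          fun i hi ↦ (norm_iteratedFDeriv_conj_comp_sub ψ x t i).trans_le
            (hψB (t - x) i (hi.trans hm))
    _ = 2 ^ m * (A * B) * (exp (-a * ‖t‖) * exp (-b * ‖t - x‖)) := by ring
    _ ≤ 2 ^ m * (A * B) * (exp (-b * ‖x‖) * exp (-(a - |b|) * ‖t‖)) :=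
        mul_le_mul_of_nonneg_left (exp_neg_mul_norm_mul_exp_neg_mul_norm_sub_le a b x t)
          (by positivity)
    _ = 2 ^ m * (A * B) * exp (-b * ‖x‖) * exp (-(a - |b|) * ‖t‖) := by ring

variable [FiniteDimensional ℝ E] [MeasurableSpace E] [BorelSpace E] (μ : Measure E)
  [μ.IsAddHaarMeasure] (hab : |b| < a)
include hab

lemma integrable_iteratedFDeriv (hm : m ≤ k) (x : E) :
    Integrable (iteratedFDeriv ℝ m (windowed f ψ x)) μ :=
  ((integrable_exp_neg_mul_norm μ (sub_pos.mpr hab)).const_mul _).mono'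
    ((contDiff hf hψ x).continuous_iteratedFDeriv (by exact_mod_cast hm)).aestronglyMeasurable
    (.of_forall (norm_iteratedFDeriv_le hf hψ hfA hψB hm x))

lemma integral_norm_iteratedFDeriv_le (hm : m ≤ k) (x : E) :
    ∫ t, ‖iteratedFDeriv ℝ m (windowed f ψ x) t‖ ∂μ ≤
      2 ^ m * (A * B) * exp (-b * ‖x‖) * ∫ t, exp (-(a - |b|) * ‖t‖) ∂μ := by
  rw [← integral_const_mul]
  exact integral_mono (integrable_iteratedFDeriv hf hψ hfA hψB μ hab hm x).norm
    ((integrable_exp_neg_mul_norm μ (sub_pos.mpr hab)).const_mul _)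
    (norm_iteratedFDeriv_le hf hψ hfA hψB hm x)

end windowed

theorem stft_K1_decay_general {n k : ℕ} {φ ψ : EuclideanSpace ℝ (Fin n) → ℂ} {a b A B : ℝ}
    (hφ : ContDiff ℝ k φ) (hψ : ContDiff ℝ k ψ) (hab : |b| < a)
    (hφA : ∀ t, ∀ i ≤ k, ‖iteratedFDeriv ℝ i φ t‖ ≤ A * exp (-a * ‖t‖))
    (hψB : ∀ t, ∀ i ≤ k, ‖iteratedFDeriv ℝ i ψ t‖ ≤ B * exp (-b * ‖t‖)) :
    ∃ C : ℝ, ∀ x ξ : EuclideanSpace ℝ (Fin n),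
      ‖STFT φ ψ x ξ‖ ≤ C * exp (-b * ‖x‖) / (1 + ‖ξ‖) ^ k := by
  set J := ∫ t : EuclideanSpace ℝ (Fin n), exp (-(a - |b|) * ‖t‖)
  refine ⟨3 ^ k * ∑ m ∈ Finset.range (k + 1), 2 ^ m * (A * B) * J, fun x ξ ↦ ?_⟩
  rw [le_div_iff₀' (by positivity), STFT_eq_fourier_windowed]
  calc (1 + ‖ξ‖) ^ k * ‖𝓕 (windowed φ ψ x) ξ‖
      ≤ 3 ^ k * ∑ m ∈ Finset.range (k + 1), ∫ t, ‖iteratedFDeriv ℝ m (windowed φ ψ x) t‖ :=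
        one_add_norm_pow_mul_norm_fourier_le (windowed.contDiff hφ hψ x)
          (fun m hm ↦ windowed.integrable_iteratedFDeriv hφ hψ hφA hψB volume hab hm x) ξ
    _ ≤ 3 ^ k * ∑ m ∈ Finset.range (k + 1), 2 ^ m * (A * B) * exp (-b * ‖x‖) * J := by
        gcongr with m hm
        exact windowed.integral_norm_iteratedFDeriv_le hφ hψ hφA hψB volume hab
          (Finset.mem_range_succ_iff.mp hm) x
    _ = (3 ^ k * ∑ m ∈ Finset.range (k + 1), 2 ^ m * (A * B) * J) * exp (-b * ‖x‖) := by
        rw [mul_assoc, Finset.sum_mul]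
        simp only [mul_right_comm]

/-- For `φ, ψ` smooth exponentially rapidly decreasing functions (in `𝒦₁(ℝⁿ)`),
the STFT `V_ψφ` decays exponentially in `x` and polynomially in `ξ` of any order. -/
theorem stft_K1_decay {n : ℕ} (φ ψ : EuclideanSpace ℝ (Fin n) → ℂ)
    (hφsm : ContDiff ℝ (⊤ : ℕ∞) φ) (hψsm : ContDiff ℝ (⊤ : ℕ∞) ψ)
    (hφ : ∀ k : ℕ, ∃ C : ℝ, ∀ t : EuclideanSpace ℝ (Fin n), ∀ i ≤ k,
      ‖iteratedFDeriv ℝ i φ t‖ ≤ C * Real.exp (-(k : ℝ) * ‖t‖))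
    (hψ : ∀ k : ℕ, ∃ C : ℝ, ∀ t : EuclideanSpace ℝ (Fin n), ∀ i ≤ k,
      ‖iteratedFDeriv ℝ i ψ t‖ ≤ C * Real.exp (-(k : ℝ) * ‖t‖)) :
    ∀ k : ℕ, ∃ C : ℝ, ∀ x ξ : EuclideanSpace ℝ (Fin n),
      ‖STFT φ ψ x ξ‖ ≤ C * Real.exp (-(k : ℝ) * ‖x‖) / (1 + ‖ξ‖) ^ k := by
  intro k
  obtain ⟨A, hA⟩ := hφ (k + 1)
  obtain ⟨B, hB⟩ := hψ k
  exact stft_K1_decay_general (hφsm.of_le (by exact_mod_cast le_top))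
    (hψsm.of_le (by exact_mod_cast le_top)) (by simp) (fun t i hi ↦ hA t i (by lia)) hB
end
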